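/- Let m ∈ {1, 2, 5}, with associated constants (ℓ_m, a_m, c_m, d_m) equal to (2, 8, 8, 3) for m = 1, (1, 8, 8, 3) for m = 2, and (2, 12, 12, 5) for m = 5. Let h ∈ ℤ odd and k ∈ ℕ with k ≥ 1, gcd(h,k) = 1, h/k ≠ −1/ℓ_m, and additionally for m = 5 assume h ≡ ±1 (mod 6) or k even (i.e., h/k ∈ S_{m1}∖{−1/ℓ_m}). Then all q-Pochhammer denominators in the two finite sums below are nonzero, and F_{h,k}(−i^{ℓ_m−3}·ζ_{c_m k}^{h}, −i^{3−ℓ_m}·ζ_{a_m k}^{d_m h}) + F_{h,k}(i^{ℓ_m−3}·ζ_{c_m k}^{h}, i^{3−ℓ_m}·ζ_{a_m k}^{d_m h}) = 0. In particular, for m = 1 this reads F_{h,k}(i·ζ_{8k}^{h}, −i·ζ_{8k}^{3h}) + F_{h,k}(−i·ζ_{8k}^{h}, i·ζ_{8k}^{3h}) = 0. -/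

import Mathlib

open Complex

/-- The root of unity `ζ_N = e^{2πi/N}`. -/
noncomputable def zetaRoot (N : ℕ) : ℂ := Complex.exp (2 * (Real.pi : ℂ) * I / N)

/-- The q-Pochhammer symbol `(a; q)_n = ∏_{j=0}^{n-1} (1 - a q^j)`. -/
noncomputable def qPoch (a q : ℂ) (n : ℕ) : ℂ := ∏ j ∈ Finset.range n, (1 - a * q ^ j)

/-- The truncated q-hypergeometric series
`F_{h,k}(z₁,z₂) = ∑_{n=0}^{k−1} (−ζ_{2k}^h; ζ_{2k}^h)_n ζ_{4k}^{n(n+1)h}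
  / ((z₁; ζ_{2k}^h)_{n+1}(z₂; ζ_{2k}^h)_{n+1})`. -/
noncomputable def Fhk (h : ℤ) (k : ℕ) (z₁ z₂ : ℂ) : ℂ :=
  ∑ n ∈ Finset.range k,
    qPoch (-(zetaRoot (2 * k) ^ h)) (zetaRoot (2 * k) ^ h) n *
        zetaRoot (4 * k) ^ ((n * (n + 1) : ℤ) * h) /
      (qPoch z₁ (zetaRoot (2 * k) ^ h) (n + 1) * qPoch z₂ (zetaRoot (2 * k) ^ h) (n + 1))

/-!
Put `q = ζ_{2k}^h`. Since `h` is odd, `q ^ k = -1`, and in each of the three cases `z₁ z₂ = q`, so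
both sums are values of the truncation `g(x)` of the universal mock theta function
`∑ (-q; q)_n q^{n(n+1)/2} / ((x; q)_{n+1} (q/x; q)_{n+1})`. The combination
`g(x q) + x² g(x)` telescopes, and `q ^ k = -1` kills the upper boundary term, leaving `-x`.
Hence the even part `G(x) = g(x) + g(-x)` satisfies `G(x q) = -x² G(x)`. After `k` steps `x` has
become `-x`, which gives `(1 + x^{2k}) G(x) = 0`; the points with `x^{2k} = -1` follow by
continuity.
-/

open Topology

lemma choose_two_succ (n : ℕ) : (n + 1).choose 2 = n + n.choose 2 := by
  rw [Nat.choose_succ_succ', Nat.choose_one_right]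

lemma two_mul_choose_two (n : ℕ) : 2 * n.choose 2 = n * (n - 1) := by
  rw [Nat.choose_two_right, Nat.mul_div_cancel' n.even_mul_pred_self.two_dvd]

section RootOfUnity

variable {R : Type*} [CommRing R] {q x : R} {k : ℕ}

lemma ne_zero_of_pow_eq_neg_one [NeZero (2 : R)] (hq : q ^ k = -1) : q ≠ 0 := by
  rintro rfl
  rcases eq_or_ne k 0 with rfl | hk
  · exact two_ne_zero (α := R) (by linear_combination hq)
  · rw [zero_pow hk] at hq
    exact two_ne_zero (α := R) (by linear_combination 2 * hq)

lemma pow_pow_two_mul_eq_one (hq : q ^ k = -1) (j : ℕ) : (q ^ j) ^ (2 * k) = 1 := by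
  rw [pow_right_comm, mul_comm, pow_mul, hq, neg_one_sq, one_pow]

lemma mul_pow_ne_one_of_pow_two_mul_ne_one (hq : q ^ k = -1) (hx : x ^ (2 * k) ≠ 1) (j : ℕ) :
    x * q ^ j ≠ 1 := fun h ↦
  hx (by simpa [mul_pow, pow_pow_two_mul_eq_one hq] using congrArg (· ^ (2 * k)) h)

lemma pow_ne_of_pow_two_mul_ne_one (hq : q ^ k = -1) (hx : x ^ (2 * k) ≠ 1) (j : ℕ) :
    q ^ j ≠ x := fun h ↦
  hx (h ▸ pow_pow_two_mul_eq_one hq j)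

lemma neg_sq_pow_mul_sq_pow_choose_two (hq : q ^ k = -1) (x : R) :
    (-x ^ 2) ^ k * (q ^ 2) ^ k.choose 2 = -x ^ (2 * k) := by
  have hsign : (-1 : R) ^ k * (-1) ^ (k - 1) = -1 := by
    cases k with
    | zero => simpa using hq
    | succ j => rw [← pow_add, Odd.neg_one_pow ⟨j, by lia⟩]
  rw [← pow_mul, two_mul_choose_two, pow_mul, hq, neg_pow, ← pow_mul]
  linear_combination x ^ (2 * k) * hsign

end RootOfUnity

lemma div_pow_two_mul_ne_one {K : Type*} [Field K] {q x : K} {k : ℕ} (hq : q ^ k = -1)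
    (hx : x ^ (2 * k) ≠ 1) : (q / x) ^ (2 * k) ≠ 1 := by
  have hq2 : q ^ (2 * k) = 1 := by simpa using pow_pow_two_mul_eq_one hq 1
  simpa [div_pow, hq2] using hx

lemma eventually_nhdsNE_pow_ne {R : Type*} [CommRing R] [IsDomain R] [TopologicalSpace R]
    [T1Space R] {n : ℕ} (hn : 0 < n) (a x : R) : ∀ᶠ y in 𝓝[≠] x, y ^ n ≠ a := by
  have hfin : {y : R | y ^ n = a}.Finite :=
    Polynomial.nthRootsFinset_toSet hn a ▸ Finset.finite_toSet _
  exact nhdsNE_le_cofinite x hfin.compl_mem_cofinite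

lemma qPoch_succ (a q : ℂ) (n : ℕ) : qPoch a q (n + 1) = qPoch a q n * (1 - a * q ^ n) :=
  Finset.prod_range_succ _ n

lemma qPoch_succ' (a q : ℂ) (n : ℕ) : qPoch a q (n + 1) = (1 - a) * qPoch (a * q) q n := by
  simp only [qPoch, Finset.prod_range_succ', pow_zero, mul_one, pow_succ', mul_assoc, mul_comm]

lemma qPoch_ne_zero_iff {a q : ℂ} {n : ℕ} : qPoch a q n ≠ 0 ↔ ∀ j < n, a * q ^ j ≠ 1 := by
  simp only [qPoch, Finset.prod_ne_zero_iff, Finset.mem_range, sub_ne_zero, ne_comm (a := (1 : ℂ))]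

/-- The `n`-th summand of the universal mock theta function `g₂(x; q)` of Gordon and McIntosh.
The exponent `n(n+1)/2` is written as a binomial coefficient. -/
noncomputable def g2Term (q x : ℂ) (n : ℕ) : ℂ :=
  qPoch (-q) q n * q ^ (n + 1).choose 2 / (qPoch x q (n + 1) * qPoch (q / x) q (n + 1))

/-- The telescoping certificate for `g2Term`: up to the factor `x`, its differences are
`g2Term q (x * q) n + x ^ 2 * g2Term q x n`. -/
noncomputable def g2Cert (q x : ℂ) (n : ℕ) : ℂ :=
  qPoch (-q) q n * q ^ (n + 1).choose 2 / (qPoch (x * q) q n * qPoch (q / x) q n)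

/-- The truncation to `k` terms of the universal mock theta function `g₂(x; q)`, which makes sense
also at roots of unity. -/
noncomputable def truncG2 (q : ℂ) (k : ℕ) (x : ℂ) : ℂ :=
  ∑ n ∈ Finset.range k, g2Term q x n

section Telescoping

variable {q x : ℂ} {n : ℕ}

lemma g2Cert_zero (q x : ℂ) : g2Cert q x 0 = 1 := by
  simp [g2Cert, qPoch]

lemma g2Cert_succ (q x : ℂ) (n : ℕ) :
    g2Cert q x (n + 1) = g2Cert q x n *
      ((1 + q ^ (n + 1)) * q ^ (n + 1) / ((1 - x * q ^ (n + 1)) * (1 - q ^ (n + 1) / x))) := by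
  rw [g2Cert, g2Cert, qPoch_succ, qPoch_succ, qPoch_succ, choose_two_succ (n + 1),
    ← mul_div_mul_comm]
  congr 1 <;> ring

lemma g2Term_eq_g2Cert_mul (q x : ℂ) (n : ℕ) :
    g2Term q x n = g2Cert q x n * (1 / ((1 - x) * (1 - q ^ (n + 1) / x))) := by
  rw [g2Term, g2Cert, qPoch_succ' x, qPoch_succ (q / x), ← mul_div_mul_comm]
  congr 1 <;> ring

lemma g2Term_mul_eq_g2Cert_mul (hq : q ≠ 0) :
    g2Term q (x * q) n = g2Cert q x n * (1 / ((1 - x * q ^ (n + 1)) * (1 - 1 / x))) := by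
  have hdiv : q / (x * q) = 1 / x := by rw [div_mul_cancel_right₀ hq, one_div]
  rw [g2Term, g2Cert, hdiv, qPoch_succ (x * q), qPoch_succ' (1 / x), one_div_mul_eq_div,
    ← mul_div_mul_comm]
  congr 1 <;> ring

lemma g2Term_mul_add_sq_mul_g2Term (hq : q ≠ 0) (hx0 : x ≠ 0) (hx1 : x ≠ 1)
    (hxq : x * q ^ (n + 1) ≠ 1) (hqx : q ^ (n + 1) ≠ x) :
    g2Term q (x * q) n + x ^ 2 * g2Term q x n = x * (g2Cert q x (n + 1) - g2Cert q x n) := by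
  rw [g2Term_mul_eq_g2Cert_mul hq, g2Term_eq_g2Cert_mul, g2Cert_succ]
  generalize q ^ (n + 1) = Q at hxq hqx ⊢
  have h1 : 1 - x ≠ 0 := sub_ne_zero.mpr hx1.symm
  have h2 : 1 - x * Q ≠ 0 := sub_ne_zero.mpr hxq.symm
  have h3 : x - Q ≠ 0 := sub_ne_zero.mpr hqx.symm
  rw [one_sub_div hx0, one_sub_div hx0]
  field_simp
  ring

lemma truncG2_mul_add_sq_mul_truncG2 {k : ℕ} (hq : q ≠ 0) (hx : x ≠ 0)
    (hxq : ∀ n ≤ k, x * q ^ n ≠ 1) (hqx : ∀ n ≤ k, q ^ n ≠ x) :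
    truncG2 q k (x * q) + x ^ 2 * truncG2 q k x = x * (g2Cert q x k - 1) := by
  have hx1 : x ≠ 1 := by simpa using hxq 0 k.zero_le
  calc truncG2 q k (x * q) + x ^ 2 * truncG2 q k x
      = ∑ n ∈ Finset.range k, (g2Term q (x * q) n + x ^ 2 * g2Term q x n) := by
        rw [truncG2, truncG2, Finset.mul_sum, Finset.sum_add_distrib]
    _ = ∑ n ∈ Finset.range k, x * (g2Cert q x (n + 1) - g2Cert q x n) :=
        Finset.sum_congr rfl fun n hn ↦
          have hn : n + 1 ≤ k := Finset.mem_range.mp hn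
          g2Term_mul_add_sq_mul_g2Term hq hx hx1 (hxq _ hn) (hqx _ hn)
    _ = x * (g2Cert q x k - 1) := by
        rw [← Finset.mul_sum, Finset.sum_range_sub, g2Cert_zero]

end Telescoping

section EvenPart

variable {q x : ℂ} {k : ℕ}

lemma qPoch_ne_zero_of_pow_two_mul_ne_one (hq : q ^ k = -1) (hx : x ^ (2 * k) ≠ 1) (n : ℕ) :
    qPoch x q n ≠ 0 :=
  qPoch_ne_zero_iff.mpr fun j _ ↦ mul_pow_ne_one_of_pow_two_mul_ne_one hq hx j

lemma qPoch_neg_self_eq_zero (hq : q ^ k = -1) : qPoch (-q) q k = 0 := by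
  cases k with
  | zero => norm_num at hq
  | succ j => rw [qPoch_succ, neg_mul, ← pow_succ', hq, neg_neg, sub_self, mul_zero]

lemma truncG2_mul (hq : q ^ k = -1) (hx0 : x ≠ 0) (hx : x ^ (2 * k) ≠ 1) :
    truncG2 q k (x * q) = -x ^ 2 * truncG2 q k x - x := by
  have htel := truncG2_mul_add_sq_mul_truncG2 (k := k) (ne_zero_of_pow_eq_neg_one hq) hx0
    (fun n _ ↦ mul_pow_ne_one_of_pow_two_mul_ne_one hq hx n)
    (fun n _ ↦ pow_ne_of_pow_two_mul_ne_one hq hx n)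
  have hcert : g2Cert q x k = 0 := by simp [g2Cert, qPoch_neg_self_eq_zero hq]
  rw [hcert] at htel
  linear_combination htel

lemma truncG2_mul_add_truncG2_neg_mul (hq : q ^ k = -1) (hx0 : x ≠ 0) (hx : x ^ (2 * k) ≠ 1) :
    truncG2 q k (x * q) + truncG2 q k (-(x * q)) =
      -x ^ 2 * (truncG2 q k x + truncG2 q k (-x)) := by
  have hneg : (-x) ^ (2 * k) ≠ 1 := by rwa [(even_two_mul k).neg_pow]
  rw [← neg_mul, truncG2_mul hq hx0 hx, truncG2_mul hq (neg_ne_zero.mpr hx0) hneg]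
  ring

lemma truncG2_mul_pow_add_truncG2_neg_mul_pow (hq : q ^ k = -1) (hx0 : x ≠ 0)
    (hx : x ^ (2 * k) ≠ 1) (j : ℕ) :
    truncG2 q k (x * q ^ j) + truncG2 q k (-(x * q ^ j)) =
      (-x ^ 2) ^ j * (q ^ 2) ^ j.choose 2 * (truncG2 q k x + truncG2 q k (-x)) := by
  induction j with
  | zero => simp
  | succ j ih =>
    have hj0 : x * q ^ j ≠ 0 := mul_ne_zero hx0 (pow_ne_zero j (ne_zero_of_pow_eq_neg_one hq))
    have hj : (x * q ^ j) ^ (2 * k) ≠ 1 := by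
      rwa [mul_pow, pow_pow_two_mul_eq_one hq, mul_one]
    rw [pow_succ q, ← mul_assoc, truncG2_mul_add_truncG2_neg_mul hq hj0 hj, ih,
      choose_two_succ]
    ring

lemma one_add_pow_mul_truncG2_add_truncG2_neg (hq : q ^ k = -1) (hx0 : x ≠ 0)
    (hx : x ^ (2 * k) ≠ 1) :
    (1 + x ^ (2 * k)) * (truncG2 q k x + truncG2 q k (-x)) = 0 := by
  have hiter := truncG2_mul_pow_add_truncG2_neg_mul_pow hq hx0 hx k
  rw [neg_sq_pow_mul_sq_pow_choose_two hq, hq, mul_neg_one, neg_neg] at hiter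
  linear_combination hiter

lemma continuousAt_qPoch {f : ℂ → ℂ} (hf : ContinuousAt f x) (q : ℂ) (n : ℕ) :
    ContinuousAt (fun y ↦ qPoch (f y) q n) x := by
  unfold qPoch
  fun_prop

lemma continuousAt_truncG2 (hq : q ^ k = -1) (hx0 : x ≠ 0) (hx : x ^ (2 * k) ≠ 1) :
    ContinuousAt (truncG2 q k) x := by
  refine tendsto_finsetSum _ fun n _ ↦ ContinuousAt.div continuousAt_const ?_ ?_
  · exact (continuousAt_qPoch continuousAt_id q _).mul
      (continuousAt_qPoch (continuousAt_const.div continuousAt_id hx0) q _)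
  · exact mul_ne_zero (qPoch_ne_zero_of_pow_two_mul_ne_one hq hx _)
      (qPoch_ne_zero_of_pow_two_mul_ne_one hq (div_pow_two_mul_ne_one hq hx) _)

theorem truncG2_add_truncG2_neg (hq : q ^ k = -1) (hx0 : x ≠ 0) (hx : x ^ (2 * k) ≠ 1) :
    truncG2 q k x + truncG2 q k (-x) = 0 := by
  have hk : 0 < 2 * k := Nat.pos_of_ne_zero fun h ↦ hx (by rw [h, pow_zero])
  have hneg : (-x) ^ (2 * k) ≠ 1 := by rwa [(even_two_mul k).neg_pow]
  have hcont : ContinuousAt (fun y ↦ truncG2 q k y + truncG2 q k (-y)) x :=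
    (continuousAt_truncG2 hq hx0 hx).add <|
      (continuousAt_truncG2 hq (neg_ne_zero.mpr hx0) hneg).comp (f := Neg.neg) continuousAt_neg
  have hpunctured : (fun y ↦ truncG2 q k y + truncG2 q k (-y)) =ᶠ[𝓝[≠] x] fun _ ↦ 0 := by
    filter_upwards [eventually_ne_nhdsWithin hx0, eventually_nhdsNE_pow_ne hk 1 x,
      eventually_nhdsNE_pow_ne hk (-1) x] with y hy0 hy1 hy2
    refine (mul_eq_zero.mp (one_add_pow_mul_truncG2_add_truncG2_neg hq hy0 hy1)).resolve_left ?_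
    exact fun h ↦ hy2 (eq_neg_of_add_eq_zero_right h)
  exact ((hcont.eventuallyEq_nhds_iff_eventuallyEq_nhdsNE continuousAt_const).mp
    hpunctured).eq_of_nhds

end EvenPart

lemma zetaRoot_ne_zero (N : ℕ) : zetaRoot N ≠ 0 :=
  Complex.exp_ne_zero _

lemma zetaRoot_mul_pow {N : ℕ} (hN : N ≠ 0) (M : ℕ) : zetaRoot (N * M) ^ N = zetaRoot M := by
  rw [zetaRoot, ← Complex.exp_nat_mul, Nat.cast_mul, ← mul_div_assoc,
    mul_div_mul_left _ _ (Nat.cast_ne_zero.mpr hN), zetaRoot]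

lemma zetaRoot_mul_zpow_pow {N : ℕ} (hN : N ≠ 0) (M : ℕ) (h : ℤ) :
    (zetaRoot (N * M) ^ h) ^ N = zetaRoot M ^ h := by
  rw [← zpow_natCast, zpow_comm, zpow_natCast, zetaRoot_mul_pow hN]

lemma zetaRoot_two : zetaRoot 2 = -1 := by
  rw [zetaRoot, Nat.cast_ofNat, mul_assoc, mul_div_cancel_left₀ _ two_ne_zero, Complex.exp_pi_mul_I]

lemma zetaRoot_two_mul_zpow_pow {h : ℤ} (hodd : Odd h) {k : ℕ} (hk : k ≠ 0) :
    (zetaRoot (2 * k) ^ h) ^ k = -1 := by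
  rw [mul_comm, zetaRoot_mul_zpow_pow hk, zetaRoot_two, hodd.neg_one_zpow]

lemma zetaRoot_four_mul_zpow (k n : ℕ) (h : ℤ) :
    zetaRoot (4 * k) ^ ((n * (n + 1) : ℤ) * h) = (zetaRoot (2 * k) ^ h) ^ (n + 1).choose 2 := by
  have hexp : (n * (n + 1) : ℤ) = (2 * (n + 1).choose 2 : ℕ) := by
    rw [two_mul_choose_two, Nat.add_sub_cancel, mul_comm]
    push_cast
    rfl
  rw [hexp, zpow_mul', zpow_natCast, pow_mul, show 4 * k = 2 * (2 * k) by ring,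
    zetaRoot_mul_zpow_pow two_ne_zero]

lemma Fhk_div_eq_truncG2 (h : ℤ) (k : ℕ) (x : ℂ) :
    Fhk h k x (zetaRoot (2 * k) ^ h / x) = truncG2 (zetaRoot (2 * k) ^ h) k x := by
  simp only [Fhk, truncG2, g2Term, zetaRoot_four_mul_zpow]

lemma I_zpow_mul_zetaRoot_mul_I_zpow_mul_zetaRoot_eq (e h : ℤ) (d k : ℕ) :
    (I ^ (e - 3) * zetaRoot (2 * (d + 1) * k) ^ h) *
      (I ^ (3 - e) * zetaRoot (2 * (d + 1) * k) ^ (d * h)) = zetaRoot (2 * k) ^ h := by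
  have hI : I ^ (e - 3) * I ^ (3 - e) = 1 := by
    rw [← zpow_add₀ I_ne_zero, sub_add_sub_cancel, sub_self, zpow_zero]
  have hζ : zetaRoot (2 * (d + 1) * k) ^ h * zetaRoot (2 * (d + 1) * k) ^ (d * h) =
      zetaRoot (2 * k) ^ h := by
    rw [← zpow_add₀ (zetaRoot_ne_zero _), show h + d * h = h * (d + 1 : ℕ) by push_cast; ring,
      zpow_mul, zpow_natCast, show 2 * (d + 1) * k = (d + 1) * (2 * k) by ring,
      zetaRoot_mul_zpow_pow d.succ_ne_zero]
  rw [mul_mul_mul_comm, hI, hζ, one_mul]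

lemma I_zpow_mul_zetaRoot_eight_pow_ne_one {h : ℤ} (hodd : Odd h) {k : ℕ} (hk : k ≠ 0) (e : ℤ) :
    (I ^ e * zetaRoot (8 * k) ^ h) ^ (2 * k) ≠ 1 := by
  intro hone
  have hfour : (I ^ e * zetaRoot (8 * k) ^ h) ^ (4 * k) = -1 := by
    have hI : (I ^ e) ^ 4 = 1 := by
      rw [← zpow_natCast, zpow_comm, zpow_natCast, I_pow_four, one_zpow]
    rw [mul_pow, pow_mul (I ^ e), hI, one_pow, one_mul, show 8 * k = 4 * k * 2 by ring,
      zetaRoot_mul_zpow_pow (by positivity), zetaRoot_two, hodd.neg_one_zpow]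
  rw [show 4 * k = 2 * k * 2 by ring, pow_mul, hone] at hfour
  norm_num at hfour

lemma I_zpow_mul_zetaRoot_twelve_pow {e : ℤ} (he : Odd e) (h : ℤ) {k : ℕ} (hk : k ≠ 0) :
    (I ^ e * zetaRoot (12 * k) ^ h) ^ (2 * k) = zetaRoot 6 ^ (3 * k + h) := by
  have hI : (I ^ e) ^ 2 = -1 := by
    rw [← zpow_natCast, zpow_comm, zpow_natCast, I_sq, he.neg_one_zpow]
  have hsix : zetaRoot 6 ^ (3 : ℤ) = -1 := by
    rw [← zetaRoot_two]
    exact_mod_cast zetaRoot_mul_pow three_ne_zero 2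
  rw [mul_pow, pow_mul, hI, show 12 * k = 2 * k * 6 by ring,
    zetaRoot_mul_zpow_pow (by positivity), zpow_add₀ (zetaRoot_ne_zero 6), zpow_mul, hsix,
    zpow_natCast]

lemma I_zpow_mul_zetaRoot_twelve_pow_ne_one {e h : ℤ} (he : Odd e) (hodd : Odd h) {k : ℕ}
    (hk : k ≠ 0) (hmod : h % 6 = 1 ∨ h % 6 = 5 ∨ Even k) :
    (I ^ e * zetaRoot (12 * k) ^ h) ^ (2 * k) ≠ 1 := by
  have hprim : IsPrimitiveRoot (zetaRoot 6) 6 := Complex.isPrimitiveRoot_exp 6 (by norm_num)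
  rw [I_zpow_mul_zetaRoot_twelve_pow he h hk, Ne, hprim.zpow_eq_one_iff_dvd]
  rw [Int.odd_iff] at hodd
  rw [Nat.even_iff] at hmod
  lia

theorem Fhk_vanishing_sum_general {h : ℤ} (hodd : Odd h) {k : ℕ} {z₁ z₂ : ℂ}
    (hz : z₁ * z₂ = zetaRoot (2 * k) ^ h) (hz₁ : z₁ ^ (2 * k) ≠ 1) :
    (∀ n ∈ Finset.range k,
      qPoch (-z₁) (zetaRoot (2 * k) ^ h) (n + 1) ≠ 0 ∧
      qPoch (-z₂) (zetaRoot (2 * k) ^ h) (n + 1) ≠ 0 ∧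
      qPoch z₁ (zetaRoot (2 * k) ^ h) (n + 1) ≠ 0 ∧
      qPoch z₂ (zetaRoot (2 * k) ^ h) (n + 1) ≠ 0) ∧
    Fhk h k (-z₁) (-z₂) + Fhk h k z₁ z₂ = 0 := by
  have hk : k ≠ 0 := by rintro rfl; simp at hz₁
  have hq := zetaRoot_two_mul_zpow_pow hodd hk
  have hz₁0 : z₁ ≠ 0 := left_ne_zero_of_mul (hz ▸ ne_zero_of_pow_eq_neg_one hq)
  obtain rfl : z₂ = zetaRoot (2 * k) ^ h / z₁ := eq_div_of_mul_eq hz₁0 (mul_comm z₁ z₂ ▸ hz)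
  have hz₂ := div_pow_two_mul_ne_one hq hz₁
  refine ⟨fun n _ ↦ ⟨?_, ?_, ?_, ?_⟩, ?_⟩
  · exact qPoch_ne_zero_of_pow_two_mul_ne_one hq (by rwa [(even_two_mul k).neg_pow]) _
  · exact qPoch_ne_zero_of_pow_two_mul_ne_one hq (by rwa [(even_two_mul k).neg_pow]) _
  · exact qPoch_ne_zero_of_pow_two_mul_ne_one hq hz₁ _
  · exact qPoch_ne_zero_of_pow_two_mul_ne_one hq hz₂ _
  · rw [← div_neg, Fhk_div_eq_truncG2, Fhk_div_eq_truncG2, add_comm]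
    exact truncG2_add_truncG2_neg hq hz₁0 hz₁

/-- Identity (1.8) of Corollary 1.3 for `m ∈ {1,2,5}`, with constants
`(ℓ_m, a_m, c_m, d_m) = (2,8,8,3), (1,8,8,3), (2,12,12,5)` respectively, valid for
`h/k ∈ S_{m1} ∖ {−1/ℓ_m}`; in addition all q-Pochhammer denominators are nonzero. -/
theorem Fhk_vanishing_sum (lm am cm dm : ℕ)
    (hcase : (lm, am, cm, dm) = (2, 8, 8, 3) ∨ (lm, am, cm, dm) = (1, 8, 8, 3) ∨
      (lm, am, cm, dm) = (2, 12, 12, 5))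
    (h : ℤ) (k : ℕ) (hk : 1 ≤ k) (hodd : Odd h) (hcop : Int.gcd h (k : ℤ) = 1)
    (hne : (h : ℚ) / (k : ℚ) ≠ -1 / (lm : ℚ))
    (hS5 : (lm, am, cm, dm) = (2, 12, 12, 5) → (h % 6 = 1 ∨ h % 6 = 5 ∨ Even k)) :
    (∀ n ∈ Finset.range k,
      qPoch (-(I ^ ((lm : ℤ) - 3)) * zetaRoot (cm * k) ^ h)
          (zetaRoot (2 * k) ^ h) (n + 1) ≠ 0 ∧
      qPoch (-(I ^ (3 - (lm : ℤ))) * zetaRoot (am * k) ^ ((dm : ℤ) * h))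
          (zetaRoot (2 * k) ^ h) (n + 1) ≠ 0 ∧
      qPoch (I ^ ((lm : ℤ) - 3) * zetaRoot (cm * k) ^ h)
          (zetaRoot (2 * k) ^ h) (n + 1) ≠ 0 ∧
      qPoch (I ^ (3 - (lm : ℤ)) * zetaRoot (am * k) ^ ((dm : ℤ) * h))
          (zetaRoot (2 * k) ^ h) (n + 1) ≠ 0) ∧
    Fhk h k (-(I ^ ((lm : ℤ) - 3)) * zetaRoot (cm * k) ^ h)
        (-(I ^ (3 - (lm : ℤ))) * zetaRoot (am * k) ^ ((dm : ℤ) * h)) +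
      Fhk h k (I ^ ((lm : ℤ) - 3) * zetaRoot (cm * k) ^ h)
        (I ^ (3 - (lm : ℤ)) * zetaRoot (am * k) ^ ((dm : ℤ) * h)) = 0 := by
  have hk0 : k ≠ 0 := Nat.one_le_iff_ne_zero.mp hk
  have hmul := I_zpow_mul_zetaRoot_mul_I_zpow_mul_zetaRoot_eq lm h dm k
  simp only [Prod.mk.injEq] at hcase
  simp only [neg_mul]
  obtain ⟨rfl, rfl, rfl, rfl⟩ | ⟨rfl, rfl, rfl, rfl⟩ | ⟨rfl, rfl, rfl, rfl⟩ := hcase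
  · exact Fhk_vanishing_sum_general hodd hmul (I_zpow_mul_zetaRoot_eight_pow_ne_one hodd hk0 _)
  · exact Fhk_vanishing_sum_general hodd hmul (I_zpow_mul_zetaRoot_eight_pow_ne_one hodd hk0 _)
  · exact Fhk_vanishing_sum_general hodd hmul
      (I_zpow_mul_zetaRoot_twelve_pow_ne_one (by decide) hodd hk0 (hS5 rfl))
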